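/- arXiv:0706.3723 — 2 statements merged into one kernel-verified Lean document; each statement's English description precedes it below -/
import Mathlib

section
/- Let M be a finite set of positive integers, let t ≥ 1, let p' ≥ 1 be a natural number, and let T be a natural number with T ≥ p'·(t + lcm(M) − 1). Let c : Fin p' → ℕ be a family of positive natural numbers (c i ≥ 1 for all i), and let b ∈ ℕ be such that (Σ_i c i) =^M_T b. Then there exists a family d : Fin p' → ℕ of positive natural numbers (d i ≥ 1 for all i) with Σ_i d i = b and c i =^M_t d i for every i. -/
/-- Two natural numbers `a` and `b` are *threshold-`t` equal mod `M`*, written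
`a =^M_t b`, if either `a = b`, or both `a ≥ t` and `b ≥ t` and `a ≡ b (mod m)`
for every `m ∈ M`. -/
def ThresholdEq (M : Finset ℕ) (t a b : ℕ) : Prop :=
  a = b ∨ (t ≤ a ∧ t ≤ b ∧ ∀ m ∈ M, a % m = b % m)

/-! Replace each `c i` by its least threshold-`t` equal representative `e i ≤ t + lcm M - 1`. When
`∑ i, c i ≠ b`, the threshold on `b` gives `∑ i, e i ≤ b`, and the two sides differ by a multiple
of `lcm M`. The threshold on `∑ i, c i` forces some `c i₀ ≥ t`, and adding the difference to `e i₀`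
keeps it threshold-`t` equal to `c i₀`. -/

theorem modEq_finset_lcm_iff {M : Finset ℕ} {a b : ℕ} :
    a ≡ b [MOD M.lcm id] ↔ ∀ m ∈ M, a ≡ b [MOD m] := by
  simp only [Nat.modEq_iff_dvd, Int.natCast_dvd, Finset.lcm_dvd_iff, id]

namespace ThresholdEq

variable {M : Finset ℕ} {s t a b k : ℕ}

protected theorem refl (M : Finset ℕ) (t a : ℕ) : ThresholdEq M t a a := Or.inl rfl

theorem mono (hst : s ≤ t) (h : ThresholdEq M t a b) : ThresholdEq M s a b :=
  h.imp_right fun ⟨ha, hb, hab⟩ => ⟨hst.trans ha, hst.trans hb, hab⟩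

theorem of_modEq_lcm (ha : t ≤ a) (hb : t ≤ b) (hab : a ≡ b [MOD M.lcm id]) :
    ThresholdEq M t a b :=
  Or.inr ⟨ha, hb, modEq_finset_lcm_iff.1 hab⟩

theorem modEq_lcm (h : ThresholdEq M t a b) : a ≡ b [MOD M.lcm id] := by
  rcases h with rfl | ⟨-, -, hab⟩
  · rfl
  · exact modEq_finset_lcm_iff.2 hab

theorem min_le (h : ThresholdEq M t a b) : min t a ≤ b := by
  rcases h with rfl | ⟨-, hb, -⟩
  · exact min_le_right t a
  · exact min_le_of_left_le hb

theorem add_right_of_lcm_dvd (h : ThresholdEq M t a b) (ha : t ≤ a) (hk : M.lcm id ∣ k) :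
    ThresholdEq M t a (b + k) := by
  have hb : t ≤ b := min_eq_left ha ▸ h.min_le
  exact of_modEq_lcm ha (Nat.le_add_right_of_le hb)
    (h.modEq_lcm.add (Nat.modEq_zero_iff_dvd.2 hk).symm)

theorem exists_le_add_lcm_sub_one (hM : M.lcm id ≠ 0) (t a : ℕ) :
    ∃ e ≤ t + M.lcm id - 1, ThresholdEq M t a e := by
  rcases lt_or_ge a t with ha | ha
  · exact ⟨a, by lia, .refl M t a⟩
  · have hlt : (a - t) % M.lcm id < M.lcm id := Nat.mod_lt _ (Nat.pos_of_ne_zero hM)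
    refine ⟨t + (a - t) % M.lcm id, by lia, of_modEq_lcm ha (Nat.le_add_right _ _) ?_⟩
    simpa only [Nat.add_sub_cancel' ha] using ((Nat.mod_modEq (a - t) _).add_left t).symm

end ThresholdEq

section Matching

variable {ι : Type*} [Fintype ι] {M : Finset ℕ} {t b : ℕ} {c : ι → ℕ}

theorem exists_thresholdEq_sum_eq_of_modEq {e : ι → ℕ} {i₀ : ι}
    (hce : ∀ i, ThresholdEq M t (c i) (e i))
    (hi₀ : t ≤ c i₀) (hle : ∑ i, e i ≤ b) (hmod : ∑ i, e i ≡ b [MOD M.lcm id]) :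
    ∃ d : ι → ℕ, ∑ i, d i = b ∧ ∀ i, ThresholdEq M t (c i) (d i) := by
  classical
  refine ⟨e + Pi.single i₀ (b - ∑ i, e i), ?_, fun i => ?_⟩
  · simp [Finset.sum_add_distrib, Nat.add_sub_cancel' hle]
  · rcases eq_or_ne i i₀ with rfl | hi
    · simpa using (hce i).add_right_of_lcm_dvd hi₀ ((Nat.modEq_iff_dvd' hle).1 hmod)
    · simpa [hi] using hce i

theorem class_sizes_matching_general [Nonempty ι]
    (hb : ThresholdEq M (Fintype.card ι * (t + M.lcm id - 1)) (∑ i, c i) b) :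
    ∃ d : ι → ℕ, ∑ i, d i = b ∧ ∀ i, ThresholdEq M t (c i) (d i) := by
  have hmod : ∑ i, c i ≡ b [MOD M.lcm id] := hb.modEq_lcm
  rcases hb with hcb | ⟨hcT, hbT, -⟩
  · exact ⟨c, hcb, fun i => .refl M t (c i)⟩
  by_cases hM : M.lcm id = 0
  · exact ⟨c, Nat.modEq_zero_iff.1 (hM ▸ hmod), fun i => .refl M t (c i)⟩
  obtain ⟨i₀, -, hi₀⟩ : ∃ i ∈ Finset.univ, t ≤ c i := by
    refine Finset.exists_le_of_sum_le Finset.univ_nonempty (le_trans ?_ hcT)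
    simpa using Nat.mul_le_mul_left (Fintype.card ι) (show t ≤ t + M.lcm id - 1 by lia)
  choose e he_le hce using fun i => ThresholdEq.exists_le_add_lcm_sub_one hM t (c i)
  have hle : ∑ i, e i ≤ b := by
    simpa using (Finset.sum_le_card_nsmul Finset.univ e _ fun i _ => he_le i).trans hbT
  have hec : ∑ i, e i ≡ ∑ i, c i [MOD M.lcm id] :=
    Nat.ModEq.sum fun i _ => (hce i).modEq_lcm.symm
  exact exists_thresholdEq_sum_eq_of_modEq hce hi₀ hle (hec.trans hmod)

end Matching

/-- Numerical core of the combinatorial lemma: positive class sizes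
`c i` summing to a number threshold-`T` equal mod `M` to `b` can be matched
by positive sizes `d i` summing to `b` with `c i =^M_t d i` for all `i`. -/
theorem class_sizes_matching
    (M : Finset ℕ) (hM : ∀ m ∈ M, 0 < m)
    (t : ℕ) (ht : 1 ≤ t) (p' : ℕ) (hp' : 1 ≤ p')
    (T : ℕ) (hT : p' * (t + M.lcm id - 1) ≤ T)
    (c : Fin p' → ℕ) (hc : ∀ i, 1 ≤ c i)
    (b : ℕ) (hb : ThresholdEq M T (∑ i, c i) b) :
    ∃ d : Fin p' → ℕ, (∀ i, 1 ≤ d i) ∧ (∑ i, d i = b) ∧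
      ∀ i, ThresholdEq M t (c i) (d i) := by
  have : Nonempty (Fin p') := ⟨⟨0, hp'⟩⟩
  obtain ⟨d, hdb, hcd⟩ := class_sizes_matching_general (hb.mono (by simpa using hT))
  exact ⟨d, fun i => (le_min ht (hc i)).trans (hcd i).min_le, hdb, hcd⟩
end

section
/- Let M be a finite set of positive integers with L = lcm(M) and let r ≥ 2. Let A and B be finite sets with |A| ≥ (2^{r+1} − 4)·L, |B| ≥ (2^{r+1} − 4)·L, and |A| ≡ |B| (mod m) for every m ∈ M.uThen for every subset S ⊆ A there exists a subset D ⊆ B such that |S| =^M_{(2^r − 4)·L} |D| and |A∖S| =^M_{(2^r − 4)·L} |B∖D|. -/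
/-!
At least one of the two parts of `A` has size at least `t`; call it the large part. Duplicator
answers the other part first: a size below `t` is copied, and a size at least `t` is moved into the
window `[t, t + L)` without changing its residue mod `L`. The rest of `B` answers the large part: it
has size at least `t` because less than `t + L` was taken, and it has the right residues because the
total and the first part do.
-/

section

variable {M : Finset ℕ} {t a a' b : ℕ}

theorem ThresholdEq.modEq (h : ThresholdEq M t a b) {m : ℕ} (hm : m ∈ M) : a ≡ b [MOD m] := by
  rcases h with rfl | ⟨-, -, h⟩
  · rfl
  · exact h m hm

theorem exists_lt_add_modEq_of_le {L : ℕ} (hL : 0 < L) (ha : t ≤ a) :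
    ∃ d, t ≤ d ∧ d < t + L ∧ a ≡ d [MOD L] := by
  refine ⟨t + (a - t) % L, Nat.le_add_right _ _, Nat.add_lt_add_left (Nat.mod_lt _ hL) t, ?_⟩
  calc a = t + (a - t) := (Nat.add_sub_cancel' ha).symm
    _ ≡ t + (a - t) % L [MOD L] := (Nat.mod_modEq _ L).symm.add_left t

theorem exists_lt_add_lcm_thresholdEq (hM : ∀ m ∈ M, 0 < m) (t a : ℕ) :
    ∃ d < t + M.lcm id, ThresholdEq M t a d := by
  rcases lt_or_ge a t with ha | ha
  · exact ⟨a, Nat.lt_add_right _ ha, Or.inl rfl⟩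
  · have hL : 0 < M.lcm id :=
      Nat.pos_of_ne_zero (Finset.lcm_ne_zero_iff.mpr fun m hm => (hM m hm).ne')
    obtain ⟨d, htd, hd, had⟩ := exists_lt_add_modEq_of_le hL ha
    exact ⟨d, hd, Or.inr ⟨ha, htd, fun m hm => had.of_dvd (Finset.dvd_lcm (f := id) hm)⟩⟩

theorem exists_add_eq_thresholdEq_of_le (hM : ∀ m ∈ M, 0 < m) (ha' : t ≤ a')
    (hb : 2 * t + M.lcm id ≤ b + 1) (hcong : ∀ m ∈ M, a + a' ≡ b [MOD m]) :
    ∃ d d', d + d' = b ∧ ThresholdEq M t a d ∧ ThresholdEq M t a' d' := by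
  obtain ⟨d, hd, had⟩ := exists_lt_add_lcm_thresholdEq hM t a
  obtain ⟨d', rfl⟩ := Nat.exists_eq_add_of_le (show d ≤ b by omega)
  exact ⟨d, d', rfl, had, Or.inr ⟨ha', by omega, fun m hm =>
    Nat.ModEq.add_left_cancel (had.modEq hm) (hcong m hm)⟩⟩

theorem exists_add_eq_thresholdEq (hM : ∀ m ∈ M, 0 < m) (ha : 2 * t ≤ a + a' + 1)
    (hb : 2 * t + M.lcm id ≤ b + 1) (hcong : ∀ m ∈ M, a + a' ≡ b [MOD m]) :
    ∃ d d', d + d' = b ∧ ThresholdEq M t a d ∧ ThresholdEq M t a' d' := by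
  rcases (show t ≤ a' ∨ t ≤ a by omega) with hta' | hta
  · exact exists_add_eq_thresholdEq_of_le hM hta' hb hcong
  · obtain ⟨d', d, hd, had', had⟩ :=
      exists_add_eq_thresholdEq_of_le hM hta hb fun m hm => Nat.add_comm a a' ▸ hcong m hm
    exact ⟨d, d', Nat.add_comm d d' ▸ hd, had, had'⟩

end

theorem exists_finset_card_eq_and_card_compl_eq {B : Type*} [Fintype B] [DecidableEq B]
    {d d' : ℕ} (h : d + d' = Fintype.card B) : ∃ D : Finset B, D.card = d ∧ Dᶜ.card = d' := by
  obtain ⟨D, -, hD⟩ := Finset.exists_subset_card_eq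
    (show d ≤ (Finset.univ : Finset B).card by rw [Finset.card_univ]; omega)
  exact ⟨D, hD, by rw [Finset.card_compl]; omega⟩

-- The sharp bounds are `2 * t - 1` and `2 * t + L - 1`; `+ 1` on the right avoids truncation.
theorem duplicator_set_move_on_sets_general {M : Finset ℕ} (hM : ∀ m ∈ M, 0 < m) {t : ℕ}
    {A B : Type*} [Fintype A] [Fintype B] [DecidableEq A] [DecidableEq B]
    (hA : 2 * t ≤ Fintype.card A + 1) (hB : 2 * t + M.lcm id ≤ Fintype.card B + 1)
    (hcong : ∀ m ∈ M, Fintype.card A ≡ Fintype.card B [MOD m]) (S : Finset A) :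
    ∃ D : Finset B, ThresholdEq M t S.card D.card ∧ ThresholdEq M t Sᶜ.card Dᶜ.card := by
  rw [← S.card_add_card_compl] at hA hcong
  obtain ⟨d, d', hd, hSd, hSd'⟩ := exists_add_eq_thresholdEq hM hA hB hcong
  obtain ⟨D, rfl, rfl⟩ := exists_finset_card_eq_and_card_compl_eq hd
  exact ⟨D, hSd, hSd'⟩

theorem two_mul_two_pow_sub_four_mul_add {r : ℕ} (hr : 2 ≤ r) (L : ℕ) :
    2 * ((2 ^ r - 4) * L) + 4 * L = (2 ^ (r + 1) - 4) * L := by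
  have h4 : 2 ^ 2 ≤ 2 ^ r := Nat.pow_le_pow_right two_pos hr
  have hcoeff : 2 ^ (r + 1) - 4 = 2 * (2 ^ r - 4) + 4 := by omega
  rw [hcoeff]
  ring

/-- Inductive step on pure sets: if `A` and `B` are large enough and of
congruent cardinalities mod every `m ∈ M`, then any subset `S ⊆ A` can be
answered by a subset `D ⊆ B` such that `|S| =^M_{(2^r−4)·L} |D|` and
`|A∖S| =^M_{(2^r−4)·L} |B∖D|`, where `L = lcm(M)`. -/
theorem duplicator_set_move_on_sets
    (M : Finset ℕ) (hM : ∀ m ∈ M, 0 < m) (r : ℕ) (hr : 2 ≤ r)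
    (A B : Type) [Fintype A] [Fintype B] [DecidableEq A] [DecidableEq B]
    (hA : (2 ^ (r + 1) - 4) * M.lcm id ≤ Fintype.card A)
    (hB : (2 ^ (r + 1) - 4) * M.lcm id ≤ Fintype.card B)
    (hcong : ∀ m ∈ M, Fintype.card A % m = Fintype.card B % m)
    (S : Finset A) :
    ∃ D : Finset B,
      ThresholdEq M ((2 ^ r - 4) * M.lcm id) S.card D.card ∧
      ThresholdEq M ((2 ^ r - 4) * M.lcm id) Sᶜ.card Dᶜ.card := by
  rw [← two_mul_two_pow_sub_four_mul_add hr] at hA hB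
  exact duplicator_set_move_on_sets_general hM (by omega) (by omega) hcong S
end
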